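/- arXiv:2112.13993 — 2 statements merged into one kernel-verified Lean document; each statement's English description precedes it below -/
import Mathlib

section
/- Let r_n, s_n be real sequences with s_n ≥ 0 for all n, not all s_n zero, and suppose the power series R(x) = Σ r_n x^n and S(x) = Σ s_n x^n converge for |x| < 1. If r_n/s_n is strictly increasing in n (where defined), then x ↦ R(x)/S(x) is strictly increasing on (0,1). -/
/-- A nonzero sequence with zero sum whose terms change sign once, from negative to positive,
gets a positive sum after being weighted by the powers of some `t > 1`. -/
theorem tsum_mul_pow_pos_of_single_sign_change {d : ℕ → ℝ} {t : ℝ} (m : ℕ) (ht : 1 < t)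
    (hneg : ∀ n < m, d n ≤ 0) (hnonneg : 0 ≤ d m) (hpos : ∀ n, m < n → 0 < d n)
    (hd : HasSum d 0) (hdt : Summable fun n => d n * t ^ n) :
    0 < ∑' n, d n * t ^ n := by
  have hsum : HasSum (fun n => d n * t ^ n - d n * t ^ m) (∑' n, d n * t ^ n) := by
    simpa using hdt.hasSum.sub (hd.mul_right (t ^ m))
  have hterm : ∀ n, 0 ≤ d n * t ^ n - d n * t ^ m := by
    intro n
    rw [← mul_sub]
    rcases lt_or_ge n m with h | h
    · exact mul_nonneg_of_nonpos_of_nonpos (hneg n h)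
        (sub_nonpos.2 (pow_le_pow_right₀ ht.le h.le))
    · have hn : 0 ≤ d n := by
        rcases h.eq_or_lt with rfl | h
        · exact hnonneg
        · exact (hpos n h).le
      exact mul_nonneg hn (sub_nonneg.2 (pow_le_pow_right₀ ht.le h))
  rw [← hsum.tsum_eq]
  refine hsum.summable.tsum_pos hterm (m + 1) ?_
  rw [← mul_sub]
  exact mul_pos (hpos _ m.lt_succ_self) (sub_pos.2 (pow_lt_pow_right₀ ht m.lt_succ_self))

theorem stmt_3 (r s : ℕ → ℝ) (hs : ∀ n, 0 < s n)
    (hr : ∀ x : ℝ, |x| < 1 → Summable (fun n => r n * x ^ n))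
    (hs' : ∀ x : ℝ, |x| < 1 → Summable (fun n => s n * x ^ n))
    (hmono : StrictMono (fun n => r n / s n)) :
    StrictMonoOn (fun x => (∑' n : ℕ, r n * x ^ n) / (∑' n : ℕ, s n * x ^ n))
      (Set.Ioo (0 : ℝ) 1) := by
  rintro x ⟨hx0, hx1⟩ y ⟨hy0, hy1⟩ hxy
  have hxa : |x| < 1 := by rwa [abs_of_pos hx0]
  have hya : |y| < 1 := by rwa [abs_of_pos hy0]
  have hS : ∀ z : ℝ, 0 < z → |z| < 1 → 0 < ∑' n, s n * z ^ n := fun z hz hz1 =>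
    (hs' z hz1).tsum_pos (fun n => (mul_pos (hs n) (pow_pos hz n)).le) 0
      (mul_pos (hs 0) (pow_pos hz 0))
  have hSx := hS x hx0 hxa
  have hSy := hS y hy0 hya
  obtain ⟨c, hc⟩ : ∃ c, c = (∑' n, r n * x ^ n) / ∑' n, s n * x ^ n := ⟨_, rfl⟩
  have hcomb : ∀ z : ℝ, |z| < 1 → HasSum (fun n => (r n - c * s n) * z ^ n)
      ((∑' n, r n * z ^ n) - c * ∑' n, s n * z ^ n) := fun z hz => by
    simpa only [sub_mul, mul_assoc] using
      (hr z hz).hasSum.sub ((hs' z hz).hasSum.mul_left c)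
  have hzero : HasSum (fun n => (r n - c * s n) * x ^ n) 0 := by
    have h := hcomb x hxa
    rwa [hc, div_mul_cancel₀ _ hSx.ne', sub_self, ← hc] at h
  have hex : ∃ m, c ≤ r m / s m := by
    by_contra! h
    have hlt : ∀ n, (r n - c * s n) * x ^ n < 0 := fun n =>
      mul_neg_of_neg_of_pos (sub_neg.2 ((div_lt_iff₀ (hs n)).1 (h n))) (pow_pos hx0 n)
    have hpos := hzero.neg.summable.tsum_pos (fun n => (neg_pos.2 (hlt n)).le) 0
      (neg_pos.2 (hlt 0))
    rw [hzero.neg.tsum_eq] at hpos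
    simp at hpos
  classical
  have hm := Nat.find_spec hex
  have hpow : ∀ n, (r n - c * s n) * x ^ n * (y / x) ^ n = (r n - c * s n) * y ^ n := fun n => by
    rw [mul_assoc, ← mul_pow, mul_div_cancel₀ _ hx0.ne']
  have key := tsum_mul_pow_pos_of_single_sign_change (t := y / x) (Nat.find hex)
    ((one_lt_div hx0).2 hxy)
    (fun n hn => mul_nonpos_of_nonpos_of_nonneg
      (sub_nonpos.2 ((div_le_iff₀ (hs n)).1 (not_le.1 (Nat.find_min hex hn)).le))
      (pow_pos hx0 n).le)
    (mul_nonneg (sub_nonneg.2 ((le_div_iff₀ (hs _)).1 hm)) (pow_pos hx0 _).le)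
    (fun n hn => mul_pos
      (sub_pos.2 ((lt_div_iff₀ (hs n)).1 (hm.trans_lt (hmono hn)))) (pow_pos hx0 n))
    hzero (by simpa only [hpow] using (hcomb y hya).summable)
  simp only [hpow] at key
  rw [(hcomb y hya).tsum_eq] at key
  change _ / _ < _ / _
  rw [← hc, lt_div_iff₀ hSy]
  exact sub_pos.1 key
end

section
/- For n ∈ ℕ₀ fixed, the infimum over a ∈ (0,1/2] of λ₈(a) = a[ψ(n+a+1) - ψ(n+3-a) + ψ(1-a) - ψ(a)] equals -1/(2n+3), attained at a = 1/2. -/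
/-- The digamma function ψ(x) = Γ'(x)/Γ(x), as the derivative of log ∘ Γ. -/
noncomputable def digamma (x : ℝ) : ℝ := deriv (fun y => Real.log (Real.Gamma y)) x

/-- The recurrence `ψ(x + 1) = ψ(x) + 1 / x`. -/
lemma digamma_add_one {x : ℝ} (hx : 0 < x) : digamma (x + 1) = digamma x + 1 / x := by
  have hd : DifferentiableAt ℝ (fun y => Real.log (Real.Gamma y)) x :=
    (Real.differentiableAt_Gamma fun m => by
      have : (0 : ℝ) ≤ m := m.cast_nonneg
      linarith).log (Real.Gamma_pos_of_pos hx).ne'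
  have he : (fun y => Real.log (Real.Gamma (y + 1))) =ᶠ[nhds x]
      fun y => Real.log (Real.Gamma y) + Real.log y := by
    filter_upwards [lt_mem_nhds hx] with y hy
    rw [Real.Gamma_add_one hy.ne', Real.log_mul hy.ne' (Real.Gamma_pos_of_pos hy).ne', add_comm]
  unfold digamma
  rw [← deriv_comp_add_const (fun y => Real.log (Real.Gamma y)), he.deriv_eq,
    deriv_fun_add hd (Real.differentiableAt_log hx.ne'), Real.deriv_log, one_div]

lemma digamma_add_nat {x : ℝ} (hx : 0 < x) (m : ℕ) :
    digamma (x + m) = digamma x + ∑ k ∈ Finset.range m, 1 / (x + k) := by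
  induction m with
  | zero => simp
  | succ m ih =>
    rw [Finset.sum_range_succ, ← add_assoc, ← ih, ← digamma_add_one (by positivity)]
    push_cast
    ring_nf

/-- Increments of the digamma function over an integer step decrease. -/
lemma digamma_add_nat_sub_le {x y : ℝ} (hx : 0 < x) (hxy : x ≤ y) (m : ℕ) :
    digamma (y + m) - digamma y ≤ digamma (x + m) - digamma x := by
  rw [digamma_add_nat hx, digamma_add_nat (hx.trans_le hxy), add_sub_cancel_left,
    add_sub_cancel_left]
  gcongr

theorem stmt_14 (n : ℕ) :
    IsLeast ((fun a : ℝ => a * (digamma (n + a + 1) - digamma (n + 3 - a) +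
        digamma (1 - a) - digamma a)) '' Set.Ioc 0 (1 / 2))
      (-(1 / (2 * n + 3))) ∧
    (1 / 2 : ℝ) * (digamma (n + (1 / 2 : ℝ) + 1) - digamma (n + 3 - (1 / 2 : ℝ)) +
        digamma (1 - (1 / 2 : ℝ)) - digamma (1 / 2 : ℝ)) = -(1 / (2 * n + 3)) := by
  have half : (1 / 2 : ℝ) * (digamma (n + (1 / 2 : ℝ) + 1) - digamma (n + 3 - (1 / 2 : ℝ)) +
      digamma (1 - (1 / 2 : ℝ)) - digamma (1 / 2 : ℝ)) = -(1 / (2 * n + 3)) := by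
    have h := digamma_add_one (x := n + (1 / 2 : ℝ) + 1) (by positivity)
    rw [show (n : ℝ) + 3 - 1 / 2 = n + 1 / 2 + 1 + 1 by ring, h,
      show (1 : ℝ) - 1 / 2 = 1 / 2 by norm_num]
    field_simp
    ring
  refine ⟨⟨⟨1 / 2, by norm_num, half⟩, ?_⟩, half⟩
  rintro _ ⟨a, ⟨ha, ha'⟩, rfl⟩
  have hn : (0 : ℝ) ≤ n := n.cast_nonneg
  have hpos : 0 < (n : ℝ) + 2 - a := by linarith
  have hmono := digamma_add_nat_sub_le ha (show a ≤ 1 - a by linarith) (n + 1)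
  have hrec := digamma_add_one hpos
  push_cast at hmono
  rw [show a + ((n : ℝ) + 1) = n + a + 1 by ring,
    show 1 - a + ((n : ℝ) + 1) = n + 2 - a by ring] at hmono
  rw [show (n : ℝ) + 2 - a + 1 = n + 3 - a by ring] at hrec
  have hfrac : a * (1 / (n + 2 - a)) ≤ 1 / (2 * n + 3) := by
    rw [mul_one_div, div_le_div_iff₀ hpos (by positivity)]
    nlinarith
  calc -(1 / (2 * (n : ℝ) + 3)) ≤ a * -(1 / (n + 2 - a)) := by linarith
    _ ≤ _ := mul_le_mul_of_nonneg_left (by linarith) ha.le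
end
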